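/- Let π* be an optimal assignment for weights w and let Δ^k be the iterates of the recursive sensitivity algorithm. Then for every edge (a,b) the real sequence k ↦ Δ^k(a,b) converges; i.e., there exists a perturbation Δ^∞ such that Δ^k(a,b) → Δ^∞(a,b) for every edge (a,b). -/

import Mathlib

open Finset Filter Topology

/-- Cost of an assignment `π : T → A` under weights `w : A × T → ℝ`. -/
noncomputable def cost {A T : Type*} [Fintype T] (w : A × T → ℝ) (π : T → A) : ℝ :=
  ∑ b : T, w (π b, b)

/-- `πs` is an optimal assignment for weights `w`: it is injective (an assignment)
and minimizes the cost among all assignments. -/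
def Optimal {A T : Type*} [Fintype T] (w : A × T → ℝ) (πs : T → A) : Prop :=
  Function.Injective πs ∧ ∀ π : T → A, Function.Injective π → cost w πs ≤ cost w π

/-- `δ` is an allowable perturbation for `(w, πs)`: `πs` remains optimal for `w + δ`. -/
def Allowable {A T : Type*} [Fintype T] (w δ : A × T → ℝ) (πs : T → A) : Prop :=
  Optimal (w + δ) πs

-- The element-wise sensitivity of edge `(a, b)` for weights `w` and assignment `πs`.
open Classical in
noncomputable def sens {A T : Type*} [Fintype T] (w : A × T → ℝ) (πs : T → A)
    (a : A) (b : T) : ℝ :=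
  if πs b = a then
    sInf {c | ∃ π : T → A, Function.Injective π ∧ π b ≠ a ∧ cost w π = c} - cost w πs
  else
    cost w πs - sInf {c | ∃ π : T → A, Function.Injective π ∧ π b = a ∧ cost w π = c}

/-- Iterates of the recursive sensitivity algorithm: `Δ⁰ = 0` and
`Δ^{k+1}(a,b) = Δ^k(a,b) + s_{w+Δ^k}(a,b)/(2N)` with `N = |T|`. -/
noncomputable def iter {A T : Type*} [Fintype T] (w : A × T → ℝ) (πs : T → A) :
    ℕ → (A × T → ℝ)
  | 0 => 0
  | k + 1 => fun e =>
      iter w πs k e + sens (w + iter w πs k) πs e.1 e.2 / (2 * (Fintype.card T : ℝ))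

lemma exists_injective_apply_eq {A T : Type*} {πs : T → A} (h : Function.Injective πs) (a : A)
    (b : T) :
    ∃ π : T → A, Function.Injective π ∧ π b = a := by
  classical
  exact ⟨Equiv.swap (πs b) a ∘ πs, (Equiv.injective _).comp h, by simp⟩

section Sensitivity

variable {A T : Type*} [Fintype T] {w : A × T → ℝ} {πs : T → A}

lemma cost_add (w δ : A × T → ℝ) (π : T → A) : cost (w + δ) π = cost w π + cost δ π := by
  simp [cost, Finset.sum_add_distrib]

lemma exists_injective_apply_ne (hT : 2 ≤ Fintype.card T) (h : Function.Injective πs) (b : T) :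
    ∃ π : T → A, Function.Injective π ∧ π b ≠ πs b := by
  classical
  obtain ⟨c, hc⟩ := Fintype.exists_ne_of_one_lt_card hT b
  exact ⟨πs ∘ Equiv.swap b c, h.comp (Equiv.injective _), by simpa using h.ne hc⟩

lemma sens_assigned_nonneg (hT : 2 ≤ Fintype.card T) (hopt : Optimal w πs) (b : T) :
    0 ≤ sens w πs (πs b) b := by
  obtain ⟨π, hπ, hb⟩ := exists_injective_apply_ne hT hopt.1 b
  rw [sens, if_pos rfl, sub_nonneg]
  refine le_csInf ⟨_, π, hπ, hb, rfl⟩ ?_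
  rintro c ⟨σ, hσ, -, rfl⟩
  exact hopt.2 σ hσ

lemma sens_unassigned_nonpos (hopt : Optimal w πs) {a : A} {b : T} (hab : πs b ≠ a) :
    sens w πs a b ≤ 0 := by
  obtain ⟨π, hπ, hb⟩ := exists_injective_apply_eq hopt.1 a b
  rw [sens, if_neg hab, sub_nonpos]
  refine le_csInf ⟨_, π, hπ, hb, rfl⟩ ?_
  rintro c ⟨σ, hσ, -, rfl⟩
  exact hopt.2 σ hσ

lemma sens_assigned_le (hopt : Optimal w πs) {π : T → A} (hπ : Function.Injective π) {b : T}
    (hb : π b ≠ πs b) : sens w πs (πs b) b ≤ cost w π - cost w πs := by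
  rw [sens, if_pos rfl]
  apply sub_le_sub_right
  refine csInf_le ⟨cost w πs, ?_⟩ ⟨π, hπ, hb, rfl⟩
  rintro c ⟨σ, hσ, -, rfl⟩
  exact hopt.2 σ hσ

lemma le_sens_unassigned (hopt : Optimal w πs) {π : T → A} (hπ : Function.Injective π) {b : T}
    (hb : π b ≠ πs b) : cost w πs - cost w π ≤ sens w πs (π b) b := by
  rw [sens, if_neg hb.symm]
  apply sub_le_sub_left
  refine csInf_le ⟨cost w πs, ?_⟩ ⟨π, hπ, rfl, rfl⟩
  rintro c ⟨σ, hσ, -, rfl⟩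
  exact hopt.2 σ hσ

/-- One step of the recursive sensitivity algorithm preserves optimality. -/
lemma Optimal.add_sens (hT : 2 ≤ Fintype.card T) (hopt : Optimal w πs) :
    Optimal (w + fun e => sens w πs e.1 e.2 / (2 * (Fintype.card T : ℝ))) πs := by
  refine ⟨hopt.1, fun π hπ => ?_⟩
  have hN : (0 : ℝ) < Fintype.card T := by
    exact_mod_cast (by lia : 0 < Fintype.card T)
  have hgap : cost w πs ≤ cost w π := hopt.2 π hπ
  have key : ∑ b : T, (sens w πs (πs b) b / (2 * (Fintype.card T : ℝ))
      - sens w πs (π b) b / (2 * (Fintype.card T : ℝ)))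
      ≤ ∑ _b : T, (cost w π - cost w πs) / (Fintype.card T : ℝ) := by
    refine Finset.sum_le_sum fun b _ => ?_
    by_cases hb : π b = πs b
    · rw [hb, sub_self]
      exact div_nonneg (sub_nonneg.2 hgap) hN.le
    · have h₁ := sens_assigned_le hopt hπ hb
      have h₂ := le_sens_unassigned hopt hπ hb
      rw [← sub_div, div_le_div_iff₀ (by positivity) hN]
      nlinarith
  rw [Finset.sum_sub_distrib, Finset.sum_const, Finset.card_univ, nsmul_eq_mul,
    mul_div_cancel₀ _ hN.ne'] at key
  rw [cost_add, cost_add]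
  simp only [cost] at key ⊢
  linarith

lemma add_iter_succ (w : A × T → ℝ) (πs : T → A) (k : ℕ) :
    w + iter w πs (k + 1) = (w + iter w πs k) +
      fun e => sens (w + iter w πs k) πs e.1 e.2 / (2 * (Fintype.card T : ℝ)) := by
  rw [add_assoc]
  rfl

/-- Every iterate of the recursive sensitivity algorithm is an allowable perturbation. -/
lemma allowable_iter (hT : 2 ≤ Fintype.card T) (hopt : Optimal w πs) (k : ℕ) :
    Allowable w (iter w πs k) πs := by
  induction k with
  | zero => simpa [Allowable, iter] using hopt
  | succ k ih =>
    rw [Allowable, add_iter_succ]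
    exact Optimal.add_sens hT ih

lemma monotone_iter_assigned (hT : 2 ≤ Fintype.card T) (hopt : Optimal w πs) (b : T) :
    Monotone fun k => iter w πs k (πs b, b) :=
  monotone_nat_of_le_succ fun k => le_add_of_nonneg_right <|
    div_nonneg (sens_assigned_nonneg hT (allowable_iter hT hopt k) b) (by positivity)

lemma antitone_iter_unassigned (hT : 2 ≤ Fintype.card T) (hopt : Optimal w πs) {a : A} {b : T}
    (hab : πs b ≠ a) : Antitone fun k => iter w πs k (a, b) :=
  antitone_nat_of_succ_le fun k => add_le_of_nonpos_right <|
    div_nonpos_of_nonpos_of_nonneg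
      (sens_unassigned_nonpos (allowable_iter hT hopt k) hab) (by positivity)

/-- On each task, the iterates change an assigned edge and a competing edge by at most the
initial cost gap in total. -/
lemma iter_assigned_sub_le (hT : 2 ≤ Fintype.card T) (hopt : Optimal w πs) {π : T → A}
    (hπ : Function.Injective π) (k : ℕ) (b : T) :
    iter w πs k (πs b, b) - iter w πs k (π b, b) ≤ cost w π - cost w πs := by
  have hnonneg : ∀ c ∈ Finset.univ, 0 ≤ iter w πs k (πs c, c) - iter w πs k (π c, c) := by
    intro c _
    by_cases hc : πs c = π c
    · simp [hc]
    · have h₁ := monotone_iter_assigned hT hopt c (Nat.zero_le k)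
      have h₂ := antitone_iter_unassigned hT hopt hc (Nat.zero_le k)
      simp only [iter, Pi.zero_apply] at h₁ h₂
      linarith
  have hsum := Finset.single_le_sum hnonneg (Finset.mem_univ b)
  have hk := (allowable_iter hT hopt k).2 π hπ
  rw [cost_add, cost_add] at hk
  rw [Finset.sum_sub_distrib] at hsum
  simp only [cost] at hk hsum ⊢
  linarith

end Sensitivity

theorem stmt15 {A T : Type*} [Fintype A] [Fintype T] [Nonempty A] [Nonempty T]
    (hT : 2 ≤ Fintype.card T) (hAT : Fintype.card T ≤ Fintype.card A)
    (w : A × T → ℝ) (πs : T → A)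
    (hopt : Optimal w πs) :
    ∃ Δinf : A × T → ℝ, ∀ a b,
      Tendsto (fun k => iter w πs k (a, b)) atTop (𝓝 (Δinf (a, b))) := by
  suffices h : ∀ e : A × T, ∃ l, Tendsto (fun k => iter w πs k e) atTop (𝓝 l) by
    choose Δinf hΔ using h
    exact ⟨Δinf, fun a b => hΔ (a, b)⟩
  rintro ⟨a, b⟩
  by_cases hab : πs b = a
  · subst hab
    obtain ⟨π, hπ, hb⟩ := exists_injective_apply_ne hT hopt.1 b
    refine ⟨_, tendsto_atTop_ciSup (monotone_iter_assigned hT hopt b)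
      ⟨cost w π - cost w πs, ?_⟩⟩
    rintro _ ⟨k, rfl⟩
    have h₁ := iter_assigned_sub_le hT hopt hπ k b
    have h₂ := antitone_iter_unassigned hT hopt hb.symm (Nat.zero_le k)
    simp only [iter, Pi.zero_apply] at h₂ ⊢
    linarith
  · obtain ⟨π, hπ, rfl⟩ := exists_injective_apply_eq hopt.1 a b
    refine ⟨_, tendsto_atTop_ciInf (antitone_iter_unassigned hT hopt hab)
      ⟨cost w πs - cost w π, ?_⟩⟩
    rintro _ ⟨k, rfl⟩
    have h₁ := iter_assigned_sub_le hT hopt hπ k b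
    have h₂ := monotone_iter_assigned hT hopt b (Nat.zero_le k)
    simp only [iter, Pi.zero_apply] at h₂ ⊢
    linarith
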